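/- Let ε ∈ (0, 1/10] with 1/ε ∈ ℤ, g' = 1 + 4ε, and N = g'/ε² (an integer). Let T be a finite set of items with sizes S : T → ℝ≥0, partitioned into large items 𝓛 (size in [ε, 1/ε²], an integer multiple of ε²) and small items 𝒮 (size < ε); for each large size ℓ let 𝓛_ℓ be the large items of size ℓ. Let B be a finite set of bins and k ∈ ℤ≥1. If the MILP (defined in the context) has a feasible solution, then there exists a fractional packing of T into B satisfying cardinality constraint k with maximum bin load at most g' + ε² + ε, which is at most (1 + 2ε)·g'. -/

import Mathlib

open scoped Classical

/-- The first component `α` of the pattern determined by `β : {1,…,N} → {0,…,M}`,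
namely `α = ∑ r, r·β r`. -/
def patAlpha {N M : ℕ} (p : Fin N → Fin (M + 1)) : ℕ :=
  ∑ r : Fin N, ((r : ℕ) + 1) * (p r : ℕ)

/-- The set of feasible patterns: vectors `β` with `∑ r, r·β r ≤ M` (where `M = 1/ε⁴`,
so that the associated item size `α·ε²` is at most `1/ε²`). Each entry of a feasible
pattern is at most `M`, so no pattern is lost by bounding entries by `M`. -/
def feasiblePatterns (N M : ℕ) : Finset (Fin N → Fin (M + 1)) :=
  Finset.univ.filter (fun p => patAlpha p ≤ M)

/-- The total (scaled) size `γ + ∑ r, r·δ r` of a configuration `c = (γ, δ)`. -/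
def confWeight {N : ℕ} (c : Fin (N + 1) × (Fin N → Fin (N + 1))) : ℕ :=
  (c.1 : ℕ) + ∑ r : Fin N, ((r : ℕ) + 1) * (c.2 r : ℕ)

/-- The set of feasible configurations: vectors `(γ, δ)` with `γ + ∑ r, r·δ r ≤ N`
(where `N = (1+4ε)/ε²`, so the bin size is at most `g' = 1 + 4ε`). Each component
of a feasible configuration is at most `N`, so none is lost by bounding entries. -/
def feasibleConfigs (N : ℕ) : Finset (Fin (N + 1) × (Fin N → Fin (N + 1))) :=
  Finset.univ.filter (fun c => confWeight c ≤ N)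

/-!
Give configuration `c` to exactly `y c` bins and pattern `p` to at most `z p` large items of size
`α_p ε²`. By (iii) and (iv) the bins offer as many slots of each size `r ε²` as the large items have
parts of that size, so these parts can be matched to slots arbitrarily. The small items are
distributed fractionally, with `x_{ic}` shared equally among the `y c` bins of configuration `c`,
and then rounded to an integral assignment in the manner of Shmoys and Tardos: in each bin the
items are poured by nonincreasing size into slots of unit capacity, and Hall's theorem matches
items to slots. An item in slot `j + 1` is no larger than the average content of slot `j`, so
rounding adds only the first item, of size less than `ε`, to the load of a bin.
-/

section CountingSlots

open Finset

variable {I Q : Type*} [Fintype I] [Fintype Q]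

theorem card_sigma_fin_fst_eq [DecidableEq Q] (z : Q → ℕ) (q : Q) :
    #{u : Σ q, Fin (z q) | u.1 = q} = z q := by
  have : ({u : Σ q, Fin (z q) | u.1 = q} : Finset (Σ q, Fin (z q))) =
      univ.map (Function.Embedding.sigmaMk (β := fun q => Fin (z q)) q) := by
    ext ⟨q', u⟩
    simp only [mem_filter, mem_univ, true_and, mem_map, Function.Embedding.sigmaMk_apply]
    exact ⟨by rintro rfl; exact ⟨u, rfl⟩, fun ⟨_, h⟩ => (congrArg Sigma.fst h).symm⟩
  rw [this, card_map, card_fin]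

theorem injOn_snd_of_fst_eq {I Q : Type*} {z : Q → ℕ} {g : I → Σ q, Fin (z q)}
    (hg : Function.Injective g) (q : Q) :
    Set.InjOn (fun i => ((g i).2 : ℕ)) {i | (g i).1 = q} := fun i hi j hj hij => by
  have hfst : (g i).1 = (g j).1 := Eq.trans hi (Eq.symm hj)
  exact hg (Sigma.ext hfst ((Fin.heq_ext_iff (congrArg z hfst)).2 hij))

theorem card_fst_fiber_le_of_injective {I Q : Type*} [Fintype I] [DecidableEq Q] {z : Q → ℕ}
    {g : I → Σ q, Fin (z q)} (hg : Function.Injective g) (q : Q) : #{i | (g i).1 = q} ≤ z q := by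
  rw [← card_range (z q)]
  refine card_le_card_of_injOn (fun i => (g i).2) (fun i hi => ?_)
    (by simpa using injOn_snd_of_fst_eq hg q)
  obtain rfl := (mem_filter.1 hi).2
  exact mem_range.2 (g i).2.2

theorem pos_of_card_fiber {I Q : Type*} [Fintype I] [DecidableEq Q] {f : I → Q} {z : Q → ℕ}
    (hf : ∀ q, #{i | f i = q} = z q) (i : I) : 0 < z (f i) := by
  rw [← hf]
  exact card_pos.2 ⟨i, by simp⟩

theorem exists_map_card_fiber_eq [DecidableEq Q] {z : Q → ℕ} (h : ∑ q, z q = Fintype.card I) :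
    ∃ f : I → Q, ∀ q, #{i | f i = q} = z q := by
  let e : I ≃ Σ q, Fin (z q) := Fintype.equivOfCardEq (by simp [h])
  refine ⟨fun i => (e i).1, fun q => ?_⟩
  rw [← card_sigma_fin_fst_eq z q]
  exact card_equiv e (by simp)

theorem sum_comp_of_card_fiber [DecidableEq Q] {M : Type*} [AddCommMonoid M] {f : I → Q}
    {z : Q → ℕ} (hf : ∀ q, #{i | f i = q} = z q) (g : Q → M) : ∑ i, g (f i) = ∑ q, z q • g q := by
  simp only [← Fintype.sum_fiberwise' f g, ← hf, sum_const, card_univ, Fintype.card_subtype]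

theorem sum_div_card_fiber [DecidableEq Q] {f : I → Q} {z : Q → ℕ}
    (hf : ∀ q, #{i | f i = q} = z q) {g : Q → ℝ} (hg : ∀ q, z q = 0 → g q = 0) :
    ∑ i, g (f i) / z (f i) = ∑ q, g q := by
  rw [sum_comp_of_card_fiber hf fun q => g q / z q]
  refine sum_congr rfl fun q _ => ?_
  rw [nsmul_eq_mul]
  exact mul_div_cancel_of_imp' fun h => hg q (Nat.cast_eq_zero.1 h)

theorem exists_transport (a : I → ℕ) (d : Q → ℕ) (h : ∑ i, a i ≤ ∑ q, d q) :
    ∃ m : I → Q → ℕ, (∀ i, ∑ q, m i q = a i) ∧ ∀ q, ∑ i, m i q ≤ d q := by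
  obtain ⟨e⟩ : Nonempty ((Σ i, Fin (a i)) ↪ (Σ q, Fin (d q))) :=
    Function.Embedding.nonempty_of_card_le (by simpa using h)
  refine ⟨fun i q => #{u : Fin (a i) | (e ⟨i, u⟩).1 = q}, fun i => ?_, fun q => ?_⟩
  · exact (card_eq_sum_card_fiberwise fun _ _ => mem_coe.2 (mem_univ _)).symm.trans
      (card_fin _)
  · refine le_trans (le_of_eq ?_) (card_fst_fiber_le_of_injective e.injective q)
    rw [← card_sigma]
    congr 1
    ext u
    simp

theorem exists_injective_of_fractional_matching {w : I → Q → ℝ} (hw : ∀ i q, 0 ≤ w i q)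
    (hrow : ∀ i, 1 ≤ ∑ q, w i q) (hcol : ∀ q, ∑ i, w i q ≤ 1) :
    ∃ g : I → Q, Function.Injective g ∧ ∀ i, 0 < w i (g i) := by
  refine (Fintype.all_card_le_filter_rel_iff_exists_injective fun i q => 0 < w i q).1 fun A => ?_
  set nbr : Finset Q := {q | ∃ i ∈ A, 0 < w i q}
  have hsupp : ∀ i ∈ A, ∑ q ∈ nbr, w i q = ∑ q, w i q := fun i hi =>
    sum_subset (subset_univ _) fun q _ hq =>
      le_antisymm (not_lt.1 fun h => hq (by simpa [nbr] using ⟨i, hi, h⟩)) (hw i q)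
  have hcard : (#A : ℝ) ≤ #nbr := calc
    (#A : ℝ) = ∑ _ ∈ A, (1 : ℝ) := by simp
    _ ≤ ∑ i ∈ A, ∑ q ∈ nbr, w i q := sum_le_sum fun i hi => (hrow i).trans_eq (hsupp i hi).symm
    _ = ∑ q ∈ nbr, ∑ i ∈ A, w i q := sum_comm
    _ ≤ ∑ _ ∈ nbr, (1 : ℝ) := sum_le_sum fun q _ =>
        (sum_le_univ_sum_of_nonneg fun i => hw i q).trans (hcol q)
    _ = #nbr := by simp
  exact_mod_cast hcard

theorem exists_map_of_card_label_le [DecidableEq Q] {κ : Type*} [DecidableEq κ]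
    {a : I → κ} {α : Q → κ} {z : Q → ℕ}
    (h : ∀ i, #{j | a j = a i} ≤ ∑ q with α q = a i, z q) :
    ∃ f : I → Q, (∀ i, α (f i) = a i) ∧ ∀ q, #{i | f i = q} ≤ z q := by
  -- Spread every item evenly over `#{j | a j = a i}` copies of the values carrying its label.
  let w : I → (Σ q, Fin (z q)) → ℝ :=
    fun i u => if α u.1 = a i then (#{j | a j = α u.1} : ℝ)⁻¹ else 0
  have hrow : ∀ i, 1 ≤ ∑ u, w i u := fun i => by
    have hpos : (0 : ℝ) < #{j | a j = a i} := by
      exact_mod_cast card_pos.2 ⟨i, by simp⟩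
    have hsum : ∑ u, w i u = (∑ q with α q = a i, z q : ℕ) * (#{j | a j = a i} : ℝ)⁻¹ := by
      simp only [w, Fintype.sum_sigma, sum_const, card_fin, nsmul_eq_mul, Nat.cast_sum, sum_mul,
        sum_filter, mul_ite, mul_zero]
      exact sum_congr rfl fun q _ => by split_ifs with hq; exacts [by rw [hq], by simp]
    rw [hsum, ← div_eq_mul_inv, one_le_div hpos]
    exact_mod_cast h i
  have hcol : ∀ u, ∑ i, w i u ≤ 1 := fun u => by
    simp only [w, ← sum_filter, sum_const, nsmul_eq_mul, eq_comm (a := α u.1)]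
    exact mul_inv_le_one
  obtain ⟨g, hg, hgw⟩ := exists_injective_of_fractional_matching
    (fun i u => by positivity) hrow hcol
  refine ⟨fun i => (g i).1, fun i => ?_, card_fst_fiber_le_of_injective hg⟩
  by_contra hne
  exact (hgw i).ne' (if_neg hne)

end CountingSlots

section Rounding

open Finset

/-- The length of the part of `[0, t]` inside the slot `[j, j + 1]`, for `0 ≤ t`. -/
def slotFill (j : ℕ) (t : ℝ) : ℝ :=
  min t (j + 1) - min t j

theorem slotFill_monotone (j : ℕ) : Monotone (slotFill j) := fun t u h => by
  unfold slotFill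
  grind

theorem slotFill_of_le {j : ℕ} {t : ℝ} (h : t ≤ j) : slotFill j t = 0 := by
  unfold slotFill
  grind

theorem slotFill_of_ge {j : ℕ} {t : ℝ} (h : (j : ℝ) + 1 ≤ t) : slotFill j t = 1 := by
  unfold slotFill
  grind

theorem slotFill_le_one (j : ℕ) (t : ℝ) : slotFill j t ≤ 1 := by
  unfold slotFill
  grind

theorem sum_range_slotFill {t : ℝ} (ht : 0 ≤ t) {K : ℕ} (hK : t ≤ K) :
    ∑ j ∈ range K, slotFill j t = t := by
  have := sum_range_sub (fun j : ℕ => min t (j : ℝ)) K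
  simpa [slotFill, ht, hK] using this

variable {I B : Type*}

/-- The amounts `x i` of the items in `A`, poured in order of nonincreasing size `s` into
consecutive slots of unit capacity, where `w i j` is the amount of item `i` poured into slot `j`.
Of the pouring order only the consequence `le_sum_prev` is recorded. -/
structure IsSlotFilling (s x : I → ℝ) (A : Finset I) (w : I → ℕ → ℝ) : Prop where
  nonneg : ∀ i ∈ A, ∀ j, 0 ≤ w i j
  sum_slot : ∀ j, ∑ i ∈ A, w i j = slotFill j (∑ i ∈ A, x i)
  sum_item : ∀ K : ℕ, ∑ i ∈ A, x i ≤ K → ∀ i ∈ A, ∑ j ∈ range K, w i j = x i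
  le_sum_prev : ∀ i ∈ A, ∀ j, 0 < w i (j + 1) → s i ≤ ∑ l ∈ A, w l j * s l

theorem IsSlotFilling.insert_of_forall_le {s x : I → ℝ} {A : Finset I} {w : I → ℕ → ℝ} {a : I}
    (h : IsSlotFilling s x A w) (hx : ∀ i, 0 ≤ x i) (ha : a ∉ A) (hsa : 0 ≤ s a)
    (hmin : ∀ i ∈ A, s a ≤ s i) :
    IsSlotFilling s x (insert a A) (Function.update w a fun j =>
      slotFill j (x a + ∑ i ∈ A, x i) - slotFill j (∑ i ∈ A, x i)) := by
  set X := ∑ i ∈ A, x i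
  have hX : 0 ≤ X := sum_nonneg fun i _ => hx i
  have hXle : X ≤ x a + X := le_add_of_nonneg_left (hx a)
  set w' := Function.update w a fun j => slotFill j (x a + X) - slotFill j X with hw'
  have hnew : ∀ j, w' a j = slotFill j (x a + X) - slotFill j X := fun j => by simp [hw']
  have hold : ∀ i ∈ A, w' i = w i := fun i hi =>
    Function.update_of_ne (ne_of_mem_of_not_mem hi ha) _ _
  have hnew_nonneg : ∀ j, 0 ≤ w' a j := fun j => by
    rw [hnew]
    exact sub_nonneg.2 (slotFill_monotone j hXle)
  have hnonneg : ∀ i ∈ insert a A, ∀ j, 0 ≤ w' i j := by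
    refine forall_mem_insert _ _ _ |>.2 ⟨hnew_nonneg, fun i hi => ?_⟩
    rw [hold i hi]
    exact h.nonneg i hi
  have hslot : ∀ j, ∑ i ∈ insert a A, w' i j = slotFill j (x a + X) := fun j => by
    rw [sum_insert ha, sum_congr rfl fun i hi => by rw [hold i hi], h.sum_slot, hnew,
      sub_add_cancel]
  refine ⟨hnonneg, by simpa only [sum_insert ha] using hslot, fun K hK => ?_, ?_⟩
  · rw [sum_insert ha] at hK
    refine forall_mem_insert _ _ _ |>.2 ⟨?_, fun i hi => ?_⟩
    · simp only [hnew, sum_sub_distrib]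
      rw [sum_range_slotFill (hX.trans hXle) hK, sum_range_slotFill hX (hXle.trans hK),
        add_sub_cancel_right]
    · rw [hold i hi]
      exact h.sum_item K (hXle.trans hK) i hi
  · refine forall_mem_insert _ _ _ |>.2 ⟨fun j hj => ?_, fun i hi j hj => ?_⟩
    · -- Slot `j + 1` is reached only once slot `j` is full, and `a` is the smallest item.
      have hfull : slotFill j (x a + X) = 1 := by
        refine slotFill_of_ge (not_lt.1 fun hlt => hj.ne' ?_)
        have hle : x a + X ≤ (j + 1 : ℕ) := by exact_mod_cast hlt.le
        rw [hnew, slotFill_of_le hle, slotFill_of_le (hXle.trans hle), sub_zero]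
      calc s a = ∑ l ∈ insert a A, w' l j * s a := by rw [← sum_mul, hslot, hfull, one_mul]
        _ ≤ ∑ l ∈ insert a A, w' l j * s l := sum_le_sum fun l hl =>
            mul_le_mul_of_nonneg_left
              ((forall_mem_insert _ _ fun l => s a ≤ s l).2 ⟨le_rfl, hmin⟩ l hl) (hnonneg l hl j)
    · rw [hold i hi] at hj
      calc s i ≤ ∑ l ∈ A, w l j * s l := h.le_sum_prev i hi j hj
        _ = ∑ l ∈ A, w' l j * s l := sum_congr rfl fun l hl => by rw [hold l hl]
        _ ≤ ∑ l ∈ insert a A, w' l j * s l := by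
            rw [sum_insert ha]
            exact le_add_of_nonneg_left (mul_nonneg (hnew_nonneg j) hsa)

theorem exists_isSlotFilling {s x : I → ℝ} (hs : ∀ i, 0 ≤ s i) (hx : ∀ i, 0 ≤ x i)
    (A : Finset I) : ∃ w, IsSlotFilling s x A w := by
  induction A using induction_on_min_value s with
  | empty => exact ⟨0, by simp, by simp [slotFill_of_le], by simp, by simp⟩
  | insert a A ha hmin ih =>
    obtain ⟨w, hw⟩ := ih
    exact ⟨_, hw.insert_of_forall_le hx ha (hs a) hmin⟩

/-- Each item is charged to the slot before its own, and slot `0` to the bound `e`. -/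
theorem IsSlotFilling.sum_le {s x : I → ℝ} {A D : Finset I} {w : I → ℕ → ℝ}
    (h : IsSlotFilling s x A w) (hs : ∀ i, 0 ≤ s i) {e : ℝ} (he : 0 ≤ e) (hse : ∀ i, s i ≤ e)
    {K : ℕ} (hK : ∑ i ∈ A, x i ≤ K) (hDA : D ⊆ A) {σ : I → ℕ} (hσ : Set.InjOn σ D)
    (hσK : ∀ i ∈ D, σ i < K) (hpos : ∀ i ∈ D, 0 < w i (σ i)) :
    ∑ i ∈ D, s i ≤ ∑ i ∈ A, x i * s i + e := by
  let charge : ℕ → ℝ := fun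
    | 0 => e
    | j + 1 => ∑ l ∈ A, w l j * s l
  have hcharge_nonneg : ∀ j, 0 ≤ charge j
    | 0 => he
    | j + 1 => sum_nonneg fun l hl => mul_nonneg (h.nonneg l hl j) (hs l)
  have hcharge : ∀ i ∈ D, s i ≤ charge (σ i) := fun i hi => by
    have hi_pos := hpos i hi
    cases hj : σ i with
    | zero => exact hse i
    | succ j => exact h.le_sum_prev i (hDA hi) j (hj ▸ hi_pos)
  calc ∑ i ∈ D, s i ≤ ∑ i ∈ D, charge (σ i) := sum_le_sum hcharge
    _ = ∑ j ∈ D.image σ, charge j := (sum_image hσ).symm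
    _ ≤ ∑ j ∈ range (K + 1), charge j := sum_le_sum_of_subset_of_nonneg
        (image_subset_iff.2 fun i hi => mem_range.2 ((hσK i hi).trans K.lt_succ_self))
        fun j _ _ => hcharge_nonneg j
    _ = ∑ j ∈ range K, ∑ l ∈ A, w l j * s l + e := sum_range_succ' _ _
    _ = ∑ i ∈ A, x i * s i + e := by
        rw [sum_comm]
        congr 1
        exact sum_congr rfl fun i hi => by rw [← sum_mul, h.sum_item K hK i hi]

/-- The rounding theorem of Shmoys and Tardos. -/
theorem exists_rounded_assignment [Fintype I] [Fintype B] [DecidableEq B] {s : I → ℝ}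
    (hs : ∀ i, 0 ≤ s i) {e : ℝ} (he : 0 ≤ e) (hse : ∀ i, s i ≤ e) {x : I → B → ℝ}
    (hx : ∀ i b, 0 ≤ x i b) (hx1 : ∀ i, ∑ b, x i b = 1) :
    ∃ f : I → B, ∀ b, #{i | f i = b} ≤ ⌈∑ i, x i b⌉₊ ∧
      ∑ i with f i = b, s i ≤ ∑ i, x i b * s i + e := by
  choose w hw using fun b => exists_isSlotFilling hs (fun i => hx i b) univ
  let K : B → ℕ := fun b => ⌈∑ i, x i b⌉₊
  have hK : ∀ b, ∑ i, x i b ≤ K b := fun b => Nat.le_ceil _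
  obtain ⟨g, hg, hgw⟩ := exists_injective_of_fractional_matching
    (w := fun i (u : Σ b, Fin (K b)) => w u.1 i u.2)
    (fun i u => (hw u.1).nonneg i (mem_univ i) u.2)
    (fun i => by
      simp only [Fintype.sum_sigma, Fin.sum_univ_eq_sum_range (w _ i),
        (hw _).sum_item _ (hK _) i (mem_univ i), hx1, le_refl])
    (fun u => ((hw u.1).sum_slot u.2).trans_le (slotFill_le_one _ _))
  refine ⟨fun i => (g i).1, fun b => ⟨card_fst_fiber_le_of_injective hg b,
    (hw b).sum_le hs he hse (hK b) (subset_univ _) (σ := fun i => (g i).2)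
    (by simpa using injOn_snd_of_fst_eq hg b) ?_ ?_⟩⟩
  · rintro i hi
    obtain rfl := (mem_filter.1 hi).2
    exact (g i).2.2
  · rintro i hi
    obtain rfl := (mem_filter.1 hi).2
    exact hgw i

end Rounding

section Packing

open Finset

variable {I T B : Type*} [Fintype I] [Fintype T] [Fintype B]

/-- `x` is a fractional packing of items with sizes `s` into the bins `B`, in which bin `b`
receives parts of at most `K b` items, of total size at most `L b`. -/
structure IsFractionalPacking (s : I → ℝ) (K : B → ℕ) (L : B → ℝ) (x : I → B → ℝ) : Prop where
  nonneg : ∀ i b, 0 ≤ x i b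
  sum_eq : ∀ i, ∑ b, x i b = s i
  card_le : ∀ b, #{i | 0 < x i b} ≤ K b
  load_le : ∀ b, ∑ i, x i b ≤ L b

namespace IsFractionalPacking

theorem mono {s : I → ℝ} {K K' : B → ℕ} {L L' : B → ℝ} {x : I → B → ℝ}
    (h : IsFractionalPacking s K L x) (hK : K ≤ K') (hL : L ≤ L') :
    IsFractionalPacking s K' L' x :=
  ⟨h.nonneg, h.sum_eq, fun b => (h.card_le b).trans (hK b), fun b => (h.load_le b).trans (hL b)⟩

theorem glue {p : T → Prop} {S : T → ℝ} {K₁ K₂ : B → ℕ} {L₁ L₂ : B → ℝ}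
    {x₁ : {t // p t} → B → ℝ} {x₂ : {t // ¬ p t} → B → ℝ}
    (h₁ : IsFractionalPacking (fun t : {t // p t} => S t) K₁ L₁ x₁)
    (h₂ : IsFractionalPacking (fun t : {t // ¬ p t} => S t) K₂ L₂ x₂) :
    IsFractionalPacking S (K₁ + K₂) (L₁ + L₂)
      fun t => if ht : p t then x₁ ⟨t, ht⟩ else x₂ ⟨t, ht⟩ where
  nonneg t := by
    split_ifs with ht
    exacts [h₁.nonneg _, h₂.nonneg _]
  sum_eq t := by
    split_ifs with ht
    exacts [h₁.sum_eq ⟨t, ht⟩, h₂.sum_eq ⟨t, ht⟩]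
  card_le b := by
    rw [card_filter, ← Fintype.sum_subtype_add_sum_subtype p]
    refine add_le_add (le_trans (le_of_eq ?_) (h₁.card_le b))
      (le_trans (le_of_eq ?_) (h₂.card_le b)) <;> rw [card_filter] <;>
      exact Fintype.sum_congr _ _ fun t => by simp [t.2]
  load_le b := by
    rw [← Fintype.sum_subtype_add_sum_subtype p]
    refine add_le_add (le_trans (le_of_eq ?_) (h₁.load_le b))
      (le_trans (le_of_eq ?_) (h₂.load_le b)) <;>
      exact Fintype.sum_congr _ _ fun t => by simp [t.2]

theorem of_assignment [DecidableEq B] {s : I → ℝ} (hs : ∀ i, 0 ≤ s i) (f : I → B) :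
    IsFractionalPacking s (fun b => #{i | f i = b}) (fun b => ∑ i with f i = b, s i)
      fun i b => if f i = b then s i else 0 where
  nonneg i b := by split_ifs; exacts [hs i, le_rfl]
  sum_eq i := by simp
  card_le b := card_le_card <| monotone_filter_right _ fun i _ (hi : 0 < ite _ _ _) => by
    by_contra hne
    exact hi.ne' (if_neg hne)
  load_le b := (sum_filter _ _).ge

/-- Item `i` is cut into `n i r` parts of each size `w r`, and bin `b` offers `d b r` slots of
that size. -/
theorem exists_of_parts {ι : Type*} [Fintype ι] {w : ι → ℝ} (hw : ∀ r, 0 ≤ w r)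
    {n : I → ι → ℕ} {d : B → ι → ℕ} (h : ∀ r, ∑ i, n i r ≤ ∑ b, d b r) :
    ∃ x, IsFractionalPacking (fun i => ∑ r, n i r * w r) (fun b => ∑ r, d b r)
      (fun b => ∑ r, d b r * w r) x := by
  choose m hm hmd using fun r => exists_transport (fun i => n i r) (fun b => d b r) (h r)
  refine ⟨fun i b => ∑ r, m r i b * w r, fun i b => ?_, fun i => ?_, fun b => ?_, fun b => ?_⟩
  · exact sum_nonneg fun r _ => mul_nonneg (Nat.cast_nonneg _) (hw r)
  · rw [sum_comm]
    exact sum_congr rfl fun r _ => by rw [← sum_mul, ← hm r i, Nat.cast_sum]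
  · have hpart : ∀ i, 0 < ∑ r, m r i b * w r → 1 ≤ ∑ r, m r i b := fun i hi => by
      obtain ⟨r, hr, hne⟩ := exists_ne_zero_of_sum_ne_zero hi.ne'
      have hm_ne : m r i b ≠ 0 := fun h0 => hne (by simp [h0])
      exact (Nat.one_le_iff_ne_zero.2 hm_ne).trans
        (single_le_sum (f := fun r => m r i b) (fun _ _ => Nat.zero_le _) hr)
    calc #{i | 0 < ∑ r, m r i b * w r}
        = ∑ i, if 0 < ∑ r, m r i b * w r then 1 else 0 := card_filter _ _
      _ ≤ ∑ i, ∑ r, m r i b := sum_le_sum fun i _ => by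
          split_ifs with hi
          exacts [hpart i hi, Nat.zero_le _]
      _ = ∑ r, ∑ i, m r i b := sum_comm
      _ ≤ ∑ r, d b r := sum_le_sum fun r _ => hmd r b
  · rw [sum_comm]
    refine sum_le_sum fun r _ => ?_
    rw [← sum_mul]
    exact mul_le_mul_of_nonneg_right (by exact_mod_cast hmd r b) (hw r)

end IsFractionalPacking

end Packing

section MILP

open Finset

/-- A pattern `β : {1,…,N} → {0,…,M}`, with the part size `r` stored at index `r - 1`. -/
abbrev Pattern (N M : ℕ) : Type :=
  Fin N → Fin (M + 1)

/-- A configuration `(γ, δ)`, with the part size `r` stored at index `r - 1`. -/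
abbrev Configuration (N : ℕ) : Type :=
  Fin (N + 1) × (Fin N → Fin (N + 1))

/-- The constraints of the MILP for size unit `u` and small-item threshold `e`
(`ε²` and `ε` in the paper). The variables `v r` are eliminated, so that (iii) and (iv)
become `parts_eq`, and (v) is imposed only for the sizes of items that occur. -/
structure IsMILPSolution {T : Type*} [Fintype T] (B : Type*) [Fintype B] {N M : ℕ} (u e : ℝ)
    (S : T → ℝ) (k : ℕ) (x : T → Configuration N → ℝ) (y : Configuration N → ℕ)
    (z : Pattern N M → ℕ) : Prop where
  nonneg : ∀ i c, 0 ≤ x i c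
  sum_configs : ∑ c ∈ feasibleConfigs N, y c = Fintype.card B
  sum_small : ∀ i, S i < e → ∑ c ∈ feasibleConfigs N, x i c = 1
  parts_eq : ∀ r, ∑ p ∈ feasiblePatterns N M, (p r : ℕ) * z p =
    ∑ c ∈ feasibleConfigs N, (c.2 r : ℕ) * y c
  sum_patterns : ∀ t, e ≤ S t → ∀ a : ℕ, S t = a * u →
    ∑ p ∈ feasiblePatterns N M with patAlpha p = a, z p = #{t' | S t' = a * u}
  card_small_le : ∀ c ∈ feasibleConfigs N, ∑ i with S i < e, x i c ≤
    (y c : ℝ) * ((k : ℝ) - ∑ r, ((c.2 r : ℕ) : ℝ))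
  load_small_le : ∀ c ∈ feasibleConfigs N, ∑ i with S i < e, x i c * S i ≤
    (y c : ℝ) * (((c.1 : ℕ) : ℝ) + 1) * u

namespace IsMILPSolution

variable {T B : Type*} [Fintype T] [Fintype B] {N M k : ℕ} {u e : ℝ} {S : T → ℝ}
  {x : T → Configuration N → ℝ} {y : Configuration N → ℕ} {z : Pattern N M → ℕ}
  {C : B → feasibleConfigs N}

theorem exists_config_assignment (h : IsMILPSolution B u e S k x y z) :
    ∃ C : B → feasibleConfigs N, ∀ c, #{b | C b = c} = y c :=
  exists_map_card_fiber_eq (z := fun c : feasibleConfigs N => y c)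
    ((sum_coe_sort _ y).trans h.sum_configs)

theorem exists_large_packing (h : IsMILPSolution B u e S k x y z) (hu : 0 ≤ u)
    (hlarge : ∀ t, e ≤ S t → ∃ a : ℕ, S t = a * u) (hC : ∀ c, #{b | C b = c} = y c) :
    ∃ X, IsFractionalPacking (fun t : {t // ¬ S t < e} => S t)
      (fun b => ∑ r, ((C b).1.2 r : ℕ))
      (fun b => ∑ r : Fin N, ((C b).1.2 r : ℕ) * ((((r : ℕ) : ℝ) + 1) * u)) X := by
  choose a ha using fun t : {t // ¬ S t < e} => hlarge t (not_lt.1 t.2)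
  have hlabel : ∀ t, #{t' | a t' = a t} ≤
      ∑ p : feasiblePatterns N M with patAlpha p.1 = a t, z p := fun t => by
    rw [sum_filter, sum_coe_sort (feasiblePatterns N M) fun p =>
      if patAlpha p = a t then z p else 0, ← sum_filter, h.sum_patterns t (not_lt.1 t.2) _ (ha t)]
    refine card_le_card_of_injOn Subtype.val (fun t' ht' => ?_) Subtype.val_injective.injOn
    simpa [ha t'] using Or.inl (by simpa using ht')
  obtain ⟨P, hP, hPz⟩ := exists_map_of_card_label_le hlabel
  have hparts : ∀ r, ∑ t, ((P t).1 r : ℕ) ≤ ∑ b, ((C b).1.2 r : ℕ) := fun r => calc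
    ∑ t, ((P t).1 r : ℕ) = ∑ p : feasiblePatterns N M, #{t | P t = p} * (p.1 r : ℕ) :=
        sum_comp_of_card_fiber (fun _ => rfl) fun p : feasiblePatterns N M => (p.1 r : ℕ)
    _ ≤ ∑ p : feasiblePatterns N M, (p.1 r : ℕ) * z p := sum_le_sum fun p _ => by
        rw [mul_comm]
        exact Nat.mul_le_mul_left _ (hPz p)
    _ = ∑ c : feasibleConfigs N, (c.1.2 r : ℕ) * y c :=
        ((sum_coe_sort _ fun p => (p r : ℕ) * z p).trans (h.parts_eq r)).trans
          (sum_coe_sort _ fun c => (c.2 r : ℕ) * y c).symm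
    _ = ∑ b, ((C b).1.2 r : ℕ) := by
        rw [sum_comp_of_card_fiber hC fun c => (c.1.2 r : ℕ)]
        simp only [smul_eq_mul, mul_comm]
  have hsize : ∀ t : {t // ¬ S t < e},
      S t = ∑ r : Fin N, ((P t).1 r : ℕ) * ((((r : ℕ) : ℝ) + 1) * u) := fun t => by
    rw [ha t, ← hP t, patAlpha]
    push_cast
    rw [sum_mul]
    exact sum_congr rfl fun r _ => by ring
  simp only [hsize]
  exact IsFractionalPacking.exists_of_parts (fun r => by positivity) hparts

theorem sum_parts_le (h : IsMILPSolution B u e S k x y z)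
    (hC : ∀ c, #{b | C b = c} = y c) (b : B) : ∑ r, ((C b).1.2 r : ℕ) ≤ k := by
  have hnonneg : (0 : ℝ) ≤ y (C b) * (k - ∑ r, (((C b).1.2 r : ℕ) : ℝ)) :=
    (sum_nonneg fun i _ => h.nonneg i (C b)).trans (h.card_small_le _ (C b).2)
  have hslack := nonneg_of_mul_nonneg_right hnonneg
    (Nat.cast_pos.2 (pos_of_card_fiber (z := fun c : feasibleConfigs N => y c) hC b))
  exact_mod_cast sub_nonneg.1 hslack

theorem eq_zero_of_config_unused (h : IsMILPSolution B u e S k x y z) {i : T} (hi : S i < e)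
    {c : Configuration N} (hc : c ∈ feasibleConfigs N) (hy : y c = 0) : x i c = 0 := by
  have hsum := h.card_small_le c hc
  rw [hy, Nat.cast_zero, zero_mul] at hsum
  exact le_antisymm ((single_le_sum (fun i _ => h.nonneg i c) (by simpa using hi)).trans hsum)
    (h.nonneg i c)

theorem exists_small_packing (h : IsMILPSolution B u e S k x y z) (he : 0 ≤ e)
    (hS : ∀ t, 0 ≤ S t) (hC : ∀ c, #{b | C b = c} = y c) :
    ∃ X, IsFractionalPacking (fun t : {t // S t < e} => S t)
      (fun b => k - ∑ r, ((C b).1.2 r : ℕ))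
      (fun b => (((C b).1.1 : ℕ) + 1) * u + e) X := by
  have hy_pos : ∀ b, (0 : ℝ) < y (C b) := fun b =>
    Nat.cast_pos.2 (pos_of_card_fiber (z := fun c : feasibleConfigs N => y c) hC b)
  have hsmall : ∀ t, t ∈ ({t | S t < e} : Finset T) ↔ S t < e := by simp
  obtain ⟨f, hf⟩ := exists_rounded_assignment (fun t : {t // S t < e} => hS t) he
    (fun t => t.2.le) (x := fun t b => x t (C b) / y (C b))
    (fun t b => div_nonneg (h.nonneg _ _) (Nat.cast_nonneg _))
    (fun t => by
      rw [sum_div_card_fiber hC fun c hc => h.eq_zero_of_config_unused t.2 c.2 hc,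
        sum_coe_sort (feasibleConfigs N) (x t), h.sum_small t t.2])
  refine ⟨_,
    (IsFractionalPacking.of_assignment (fun t : {t // S t < e} => hS t) f).mono
      (fun b => ?_) fun b => ?_⟩
  · refine (hf b).1.trans (Nat.ceil_le.2 ?_)
    rw [Nat.cast_sub (h.sum_parts_le hC b), Nat.cast_sum, ← sum_div,
      div_le_iff₀' (hy_pos b), ← sum_subtype _ hsmall fun t => x t (C b)]
    exact h.card_small_le _ (C b).2
  · refine (hf b).2.trans (add_le_add_left ?_ e)
    simp only [div_mul_eq_mul_div]
    rw [← sum_div, div_le_iff₀' (hy_pos b), ← sum_subtype _ hsmall fun t => x t (C b) * S t,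
      ← mul_assoc]
    exact h.load_small_le _ (C b).2

end IsMILPSolution

theorem load_le_of_mem_feasibleConfigs {N : ℕ} {c : Configuration N} (hc : c ∈ feasibleConfigs N)
    {u : ℝ} (hu : 0 ≤ u) :
    (((c.1 : ℕ) : ℝ) + 1) * u + ∑ r : Fin N, ((c.2 r : ℕ) : ℝ) * ((((r : ℕ) : ℝ) + 1) * u) ≤
      (N + 1) * u := by
  have hweight : (confWeight c : ℝ) ≤ N := by exact_mod_cast (mem_filter.1 hc).2
  calc _ = ((confWeight c : ℝ) + 1) * u := by
        rw [confWeight]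
        push_cast
        rw [add_right_comm, add_mul _ (∑ r, _), sum_mul]
        congr 1
        exact sum_congr rfl fun r _ => by ring
    _ ≤ (N + 1) * u := by gcongr

theorem packing_of_milp_solution_general {T B : Type*} [Fintype T] [Fintype B] {u e : ℝ}
    (hu : 0 ≤ u) (he : 0 ≤ e) {N M k : ℕ} {S : T → ℝ} (hS : ∀ t, 0 ≤ S t)
    (hlarge : ∀ t, e ≤ S t → ∃ a : ℕ, S t = a * u) {x : T → Configuration N → ℝ}
    {y : Configuration N → ℕ} {z : Pattern N M → ℕ} (h : IsMILPSolution B u e S k x y z) :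
    ∃ X : T → B → ℝ, IsFractionalPacking S (fun _ => k) (fun _ => (N + 1) * u + e) X := by
  obtain ⟨C, hC⟩ := h.exists_config_assignment
  obtain ⟨X₁, hX₁⟩ := h.exists_small_packing he hS hC
  obtain ⟨X₂, hX₂⟩ := h.exists_large_packing hu hlarge hC
  refine ⟨_, (hX₁.glue hX₂).mono (fun b => ?_) fun b => ?_⟩
  · exact (Nat.sub_add_cancel (h.sum_parts_le hC b)).le
  · have := load_le_of_mem_feasibleConfigs (C b).2 hu
    simp only [Pi.add_apply]
    linarith

end MILP

/-- If the MILP has a feasible solution `(v, x, y, z)`, then there is a feasible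
fractional packing of the instance satisfying cardinality constraint `k` with maximum
bin load at most `g' + ε² + ε`, which is at most `(1 + 2ε)·g'`, for `g' = 1 + 4ε`. -/
theorem packing_of_milp_solution {T B : Type*} [Fintype T] [Fintype B] (ε : ℝ)
    (hε : 0 < ε) (hε10 : ε ≤ 1 / 10) (hεint : ∃ n : ℤ, (1 : ℝ) / ε = n)
    (N M : ℕ) (hN : (N : ℝ) = (1 + 4 * ε) / ε ^ 2) (hM : (M : ℝ) = 1 / ε ^ 4)
    (S : T → ℝ) (hS : ∀ t, 0 ≤ S t)
    (hlarge : ∀ t, ε ≤ S t → S t ≤ 1 / ε ^ 2 ∧ ∃ a : ℕ, S t = (a : ℝ) * ε ^ 2)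
    (k : ℕ) (hk : 1 ≤ k)
    (hmilp : ∃ (v : Fin N → ℝ) (xv : T → (Fin (N + 1) × (Fin N → Fin (N + 1))) → ℝ)
      (y : (Fin (N + 1) × (Fin N → Fin (N + 1))) → ℕ) (z : (Fin N → Fin (M + 1)) → ℕ),
      (∀ r, 0 ≤ v r) ∧
      (∀ i c, 0 ≤ xv i c) ∧
      (∑ c ∈ feasibleConfigs N, y c = Fintype.card B) ∧
      (∀ i, S i < ε → ∑ c ∈ feasibleConfigs N, xv i c = 1) ∧
      (∀ r : Fin N, v r = ∑ p ∈ feasiblePatterns N M, ((p r : ℕ) : ℝ) * (z p : ℝ)) ∧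
      (∀ r : Fin N, v r = ∑ c ∈ feasibleConfigs N, ((c.2 r : ℕ) : ℝ) * (y c : ℝ)) ∧
      (∀ a : ℕ, ε ≤ (a : ℝ) * ε ^ 2 → (a : ℝ) * ε ^ 2 ≤ 1 / ε ^ 2 →
        ∑ p ∈ (feasiblePatterns N M).filter (fun p => patAlpha p = a), z p
          = (Finset.univ.filter (fun t : T => S t = (a : ℝ) * ε ^ 2)).card) ∧
      (∀ c ∈ feasibleConfigs N,
        ∑ i ∈ Finset.univ.filter (fun t : T => S t < ε), xv i c
          ≤ (y c : ℝ) * ((k : ℝ) - ∑ r : Fin N, ((c.2 r : ℕ) : ℝ))) ∧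
      (∀ c ∈ feasibleConfigs N,
        ∑ i ∈ Finset.univ.filter (fun t : T => S t < ε), xv i c * S i
          ≤ (y c : ℝ) * (((c.1 : ℕ) : ℝ) + 1) * ε ^ 2)) :
    (∃ x : T → B → ℝ,
      (∀ t b, 0 ≤ x t b) ∧
      (∀ t, ∑ b, x t b = S t) ∧
      (∀ b, {t | 0 < x t b}.ncard ≤ k) ∧
      (∀ b, ∑ t, x t b ≤ (1 + 4 * ε) + ε ^ 2 + ε)) ∧
    (1 + 4 * ε) + ε ^ 2 + ε ≤ (1 + 2 * ε) * (1 + 4 * ε) := by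
  obtain ⟨v, xv, y, z, -, hx, hyB, hx1, hvz, hvy, hz, hcard, hload⟩ := hmilp
  obtain ⟨X, hX⟩ := packing_of_milp_solution_general (sq_nonneg ε) hε.le hS
    (fun t ht => (hlarge t ht).2)
    ⟨hx, hyB, hx1, fun r => by exact_mod_cast (hvz r).symm.trans (hvy r),
      fun t ht a hta => hz a (hta ▸ ht) (hta ▸ (hlarge t ht).1), hcard, hload⟩
  have hload_eq : ((N : ℝ) + 1) * ε ^ 2 + ε = (1 + 4 * ε) + ε ^ 2 + ε := by
    rw [hN, add_one_mul, div_mul_cancel₀ _ (pow_ne_zero 2 hε.ne')]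
  exact ⟨⟨X, hX.nonneg, hX.sum_eq,
    fun b => by simpa [Set.ncard_eq_toFinset_card'] using hX.card_le b,
    fun b => (hX.load_le b).trans_eq hload_eq⟩, by nlinarith⟩
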